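/- arXiv:0708.3938 — 2 statements merged into one kernel-verified Lean document; each statement's English description precedes it below -/
import Mathlib

section
/- Let Q ⊂ ℝ² be the union of the two closed triangles with vertices A₁ = (0,0), B₁ = (1,2), C₁ = (2,0) and A₂ = (3/2, 1), B₂ = (5/2, −1), C₂ = (7/2, 1) respectively, and let X = {(x₁, x₂, x₃) : (x₁, x₂) ∈ Q, 0 ≤ x₃ ≤ 1} ⊂ ℝ³. Let a¹ = (0, 1, 0) and a² = (1, 0, 0). Then R_c(X) is proximinal in C(X). -/
open Matrix Set Filter Topology

/-- `p 0, p 1, ..., p (m-1)` is a (finite) path whose first difference is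
perpendicular to `a1`, with differences alternately perpendicular to `a1` and `a2`,
and all differences nonzero. -/
def IsPathFrom {n : ℕ} (a1 a2 : Fin n → ℝ) (m : ℕ) (p : ℕ → Fin n → ℝ) : Prop :=
  ∀ i, i + 1 < m →
    p (i + 1) - p i ≠ 0 ∧
    (i % 2 = 0 → a1 ⬝ᵥ (p (i + 1) - p i) = 0) ∧
    (i % 2 = 1 → a2 ⬝ᵥ (p (i + 1) - p i) = 0)

/-- A finite path with respect to the directions `a1` and `a2` (the alternation may
start with either direction). -/
def IsPath {n : ℕ} (a1 a2 : Fin n → ℝ) (m : ℕ) (p : ℕ → Fin n → ℝ) : Prop :=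
  IsPathFrom a1 a2 m p ∨ IsPathFrom a2 a1 m p

/-- A finite path of length `m` (i.e. with `m` points) all of whose points lie in `X`. -/
def IsPathIn {n : ℕ} (a1 a2 : Fin n → ℝ) (X : Set (Fin n → ℝ)) (m : ℕ)
    (p : ℕ → Fin n → ℝ) : Prop :=
  1 ≤ m ∧ IsPath a1 a2 m p ∧ ∀ i < m, p i ∈ X

/-- An irreducible path in `X`: no strictly shorter path in `X` joins its endpoints. -/
def IsIrreduciblePathIn {n : ℕ} (a1 a2 : Fin n → ℝ) (X : Set (Fin n → ℝ)) (m : ℕ)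
    (p : ℕ → Fin n → ℝ) : Prop :=
  IsPathIn a1 a2 X m p ∧
  ¬ ∃ l q, l < m ∧ IsPathIn a1 a2 X l q ∧ q 0 = p 0 ∧ q (l - 1) = p (m - 1)

/-- An infinite path whose first difference is perpendicular to `a1`. -/
def IsInfPathFrom {n : ℕ} (a1 a2 : Fin n → ℝ) (p : ℕ → Fin n → ℝ) : Prop :=
  ∀ i,
    p (i + 1) - p i ≠ 0 ∧
    (i % 2 = 0 → a1 ⬝ᵥ (p (i + 1) - p i) = 0) ∧
    (i % 2 = 1 → a2 ⬝ᵥ (p (i + 1) - p i) = 0)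

/-- An infinite path with respect to the directions `a1` and `a2`. -/
def IsInfPath {n : ℕ} (a1 a2 : Fin n → ℝ) (p : ℕ → Fin n → ℝ) : Prop :=
  IsInfPathFrom a1 a2 p ∨ IsInfPathFrom a2 a1 p

/-- `f` is bounded on `X`. -/
def BddOn {n : ℕ} (f : (Fin n → ℝ) → ℝ) (X : Set (Fin n → ℝ)) : Prop :=
  ∃ M, ∀ x ∈ X, |f x| ≤ M

/-- `R_a(X)`: sums of two ridge functions with directions `a1, a2` that are bounded on `X`
(the individual summands need not be bounded). -/
def RaSet {n : ℕ} (a1 a2 : Fin n → ℝ) (X : Set (Fin n → ℝ)) : Set ((Fin n → ℝ) → ℝ) :=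
  {f | (∃ g1 g2 : ℝ → ℝ, ∀ x ∈ X, f x = g1 (a1 ⬝ᵥ x) + g2 (a2 ⬝ᵥ x)) ∧ BddOn f X}

/-- `R_b(X)`: sums of two ridge functions with directions `a1, a2` whose summands are
bounded on `X`. -/
def RbSet {n : ℕ} (a1 a2 : Fin n → ℝ) (X : Set (Fin n → ℝ)) : Set ((Fin n → ℝ) → ℝ) :=
  {f | ∃ g1 g2 : ℝ → ℝ, (∀ x ∈ X, f x = g1 (a1 ⬝ᵥ x) + g2 (a2 ⬝ᵥ x)) ∧
    BddOn (fun x => g1 (a1 ⬝ᵥ x)) X ∧ BddOn (fun x => g2 (a2 ⬝ᵥ x)) X}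

/-- `R_c(X)`: sums of two ridge functions with directions `a1, a2` whose summands are
continuous on `X`. -/
def RcSet {n : ℕ} (a1 a2 : Fin n → ℝ) (X : Set (Fin n → ℝ)) : Set ((Fin n → ℝ) → ℝ) :=
  {f | ∃ g1 g2 : ℝ → ℝ, (∀ x ∈ X, f x = g1 (a1 ⬝ᵥ x) + g2 (a2 ⬝ᵥ x)) ∧
    ContinuousOn (fun x => g1 (a1 ⬝ᵥ x)) X ∧ ContinuousOn (fun x => g2 (a2 ⬝ᵥ x)) X}

/-- The uniform (sup) distance of `f` and `g` over `X`. -/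
noncomputable def supDist {n : ℕ} (X : Set (Fin n → ℝ)) (f g : (Fin n → ℝ) → ℝ) : ℝ :=
  sSup {r | ∃ x ∈ X, r = |f x - g x|}

/-- `f` has an extremal element (best approximation in the sup norm over `X`) in `S`. -/
def HasExtremalIn {n : ℕ} (X : Set (Fin n → ℝ)) (f : (Fin n → ℝ) → ℝ)
    (S : Set ((Fin n → ℝ) → ℝ)) : Prop :=
  ∃ g0 ∈ S, supDist X f g0 = sInf ((supDist X f) '' S)

/-- The orbit of `t`: all points of `X` joined to `t` by a common path lying in `X`. -/
def Orbit {n : ℕ} (a1 a2 : Fin n → ℝ) (X : Set (Fin n → ℝ)) (t : Fin n → ℝ) :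
    Set (Fin n → ℝ) :=
  {y | ∃ m p, IsPathIn a1 a2 X m p ∧ (∃ i < m, p i = t) ∧ (∃ j < m, p j = y)}

/-- The variation of `f` on a set `Y`. -/
noncomputable def varOn {n : ℕ} (f : (Fin n → ℝ) → ℝ) (Y : Set (Fin n → ℝ)) : ℝ :=
  sSup {r | ∃ x ∈ Y, ∃ y ∈ Y, r = |f x - f y|}

/-- The planar set `Q`: the union of the closed triangles `A₁B₁C₁` and `A₂B₂C₂`. -/
noncomputable def Qset : Set (Fin 2 → ℝ) :=
  convexHull ℝ {![(0 : ℝ), 0], ![(1 : ℝ), 2], ![(2 : ℝ), 0]} ∪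
  convexHull ℝ {![(3 / 2 : ℝ), 1], ![(5 / 2 : ℝ), -1], ![(7 / 2 : ℝ), 1]}

/-!
Eliminating `u`, a function `v` is the first summand of an approximation
`f ≈ v (α p) + u (β p)` with error `E` exactly when it satisfies the difference constraints
`v (α q) - v (α p) ≤ f q - f p + 2 * E` for all `p`, `q` with `β p = β q`. Solutions with error
`E + ε` have, after normalisation, an ultralimit solving the constraints with the optimal error `E`,
but that limit may be discontinuous. When links `β p = β q` persist under small displacements of
their endpoints, relaxing the constraints turns it into a lower and an upper semicontinuous function
such that everything in between is a solution, and the Katětov–Tong insertion theorem provides a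
continuous one. The second summand is inserted between the fibrewise supremum of `f - v ∘ α`
lowered by `E` and its fibrewise infimum raised by `E`. Over `Q`, links persist because horizontal
slices are intervals and two slices meet exactly when their heights lie in a common one of the
closed intervals `[0, 2]` and `[-1, 1]`.
-/

section Insertion

variable {Y : Type*} [TopologicalSpace Y] [NormalSpace Y] [ParacompactSpace Y] {s w : Y → ℝ}

theorem exists_continuousMap_between_of_lt (hs : UpperSemicontinuous s)
    (hw : LowerSemicontinuous w) (hsw : ∀ y, s y < w y) :
    ∃ g : C(Y, ℝ), ∀ y, s y < g y ∧ g y < w y := by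
  refine exists_continuous_forall_mem_convex_of_local_const (t := fun y => Ioo (s y) (w y))
    (fun y => convex_Ioo _ _) fun y => ?_
  obtain ⟨c, hsc, hcw⟩ := exists_between (hsw y)
  exact ⟨c, (hs y c hsc).and (hw y c hcw)⟩

theorem exists_continuousMap_between_near {ε : ℝ} (hε : 0 < ε) (hs : UpperSemicontinuous s)
    (hw : LowerSemicontinuous w) (hsw : ∀ y, s y ≤ w y) (g : C(Y, ℝ))
    (hg : ∀ y, s y - ε < g y ∧ g y < w y + ε) :
    ∃ g' : C(Y, ℝ), (∀ y, s y - ε / 2 < g' y ∧ g' y < w y + ε / 2) ∧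
      ∀ y, dist (g y) (g' y) ≤ ε := by
  have hs' : UpperSemicontinuous fun y => max (s y - ε / 2) (g y - ε) :=
    (hs.add continuous_const.upperSemicontinuous).sup
      (g.continuous.sub continuous_const).upperSemicontinuous
  have hw' : LowerSemicontinuous fun y => min (w y + ε / 2) (g y + ε) :=
    (hw.add continuous_const.lowerSemicontinuous).inf
      (g.continuous.add continuous_const).lowerSemicontinuous
  obtain ⟨g', hg'⟩ := exists_continuousMap_between_of_lt hs' hw' fun y => by
    have := hsw y
    have := hg y
    exact max_lt (lt_min (by linarith) (by linarith)) (lt_min (by linarith) (by linarith))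
  simp only [max_lt_iff, lt_min_iff] at hg'
  refine ⟨g', fun y => ⟨(hg' y).1.1, (hg' y).2.1⟩, fun y => ?_⟩
  rw [Real.dist_eq, abs_le]
  constructor <;> linarith [(hg' y).1.2, (hg' y).2.2]

theorem exists_seq_continuousMap_between_near (hs : UpperSemicontinuous s)
    (hw : LowerSemicontinuous w) (hsw : ∀ y, s y ≤ w y) :
    ∃ G : ℕ → C(Y, ℝ),
      (∀ n y, s y - 1 / 2 / 2 ^ n < G n y ∧ G n y < w y + 1 / 2 / 2 ^ n) ∧
      ∀ n y, dist (G n y) (G (n + 1) y) ≤ 1 / 2 / 2 ^ n := by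
  let Near (n : ℕ) (g : C(Y, ℝ)) : Prop :=
    ∀ y, s y - 1 / 2 / 2 ^ n < g y ∧ g y < w y + 1 / 2 / 2 ^ n
  obtain ⟨g₀, hg₀⟩ : ∃ g, Near 0 g :=
    exists_continuousMap_between_of_lt (hs.add continuous_const.upperSemicontinuous)
      (hw.add continuous_const.lowerSemicontinuous) fun y => by
        rw [pow_zero]
        linarith [hsw y]
  have refinement (n : ℕ) (g : {g // Near n g}) :
      ∃ g' : {g' // Near (n + 1) g'}, ∀ y, dist (g.1 y) (g'.1 y) ≤ 1 / 2 / 2 ^ n := by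
    obtain ⟨g', hg', hdist⟩ :=
      exists_continuousMap_between_near (by positivity) hs hw hsw g.1 g.2
    exact ⟨⟨g', by simpa only [Near, pow_succ, div_div, mul_assoc] using hg'⟩, hdist⟩
  choose next hnext using refinement
  let G : ∀ n, {g // Near n g} := Nat.rec ⟨g₀, hg₀⟩ next
  exact ⟨fun n => (G n).1, fun n => (G n).2, fun n => hnext n (G n)⟩

theorem exists_continuousMap_between (hs : UpperSemicontinuous s)
    (hw : LowerSemicontinuous w) (hsw : ∀ y, s y ≤ w y) :
    ∃ g : C(Y, ℝ), ∀ y, s y ≤ g y ∧ g y ≤ w y := by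
  obtain ⟨G, hG, hG_dist⟩ := exists_seq_continuousMap_between_near hs hw hsw
  have geometric_lim (c : ℝ) : Tendsto (fun n : ℕ => c / 2 ^ n) atTop (𝓝 0) :=
    (tendsto_pow_atTop_atTop_of_one_lt one_lt_two).const_div_atTop c
  choose g hg using fun y =>
    cauchySeq_tendsto_of_complete (cauchySeq_of_le_geometric_two fun n => hG_dist n y)
  have hg_unif : TendstoUniformly (fun n y => G n y) g atTop := by
    refine Metric.tendstoUniformly_iff.2 fun δ hδ => ?_
    filter_upwards [(geometric_lim 1).eventually_lt_const hδ] with n hn y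
    rw [dist_comm]
    exact (dist_le_of_le_geometric_two_of_tendsto (fun n => hG_dist n y) (hg y) n).trans_lt hn
  refine ⟨⟨g, hg_unif.continuous (.of_forall fun n => (G n).continuous)⟩, fun y => ⟨?_, ?_⟩⟩
  · have hlim := (geometric_lim (1 / 2)).const_sub (s y)
    rw [sub_zero] at hlim
    exact le_of_tendsto_of_tendsto' hlim (hg y) fun n => (hG n y).1.le
  · have hlim := (geometric_lim (1 / 2)).const_add (w y)
    rw [add_zero] at hlim
    exact le_of_tendsto_of_tendsto' (hg y) hlim fun n => (hG n y).2.le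

end Insertion

section Potentials

variable {X Y Z : Type*} {α : X → Y} {β : X → Z} {f : X → ℝ} {D : ℝ} {u v : Y → ℝ}

/-- The system of difference constraints `u (α q) - v (α p) ≤ f q - f p + D`, one for each pair of
points that `β` does not separate. With `u = v = g` and `D = 2 * E` these are the constraints that
the other summand imposes on `g` when `g ∘ α + h ∘ β` approximates `f` up to `E`. -/
def IsPotentialPair (α : X → Y) (β : X → Z) (f : X → ℝ) (D : ℝ) (u v : Y → ℝ) : Prop :=
  ∀ p q, β p = β q → u (α q) ≤ v (α p) + (f q - f p + D)

theorem isPotentialPair_of_abs_sub_le {E : ℝ} {h : Z → ℝ}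
    (hE : ∀ p, |f p - (v (α p) + h (β p))| ≤ E) : IsPotentialPair α β f (2 * E) v v := by
  intro p q hpq
  have hp := abs_le.1 (hE p)
  have hq := abs_le.1 (hE q)
  rw [hpq] at hp
  linarith

namespace IsPotentialPair

theorem neg (h : IsPotentialPair α β f D u v) : IsPotentialPair α β (-f) D (-v) (-u) := by
  intro p q hpq
  have := h q p hpq.symm
  simp only [Pi.neg_apply]
  linarith

theorem mono {u' v' : Y → ℝ} (h : IsPotentialPair α β f D u v) (hu : u' ≤ u) (hv : v ≤ v') :
    IsPotentialPair α β f D u' v' := fun p q hpq => by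
  linarith [h p q hpq, hu (α q), hv (α p)]

end IsPotentialPair

theorem exists_tendsto_ultrafilter_of_abs_le {ι : Type*} (U : Ultrafilter ι) {a : ι → ℝ} {C : ℝ}
    (ha : ∀ i, |a i| ≤ C) : ∃ l, Tendsto a U (𝓝 l) := by
  obtain ⟨l, -, hl⟩ := isCompact_Icc.ultrafilter_le_nhds' (U.map a)
    (mem_map.2 (univ_mem' fun i => abs_le.1 (ha i)))
  exact ⟨l, hl⟩

/-- Two points are equivalent if the functions `v n` differ at them by a bounded amount. -/
def boundedDiffSetoid (v : ℕ → Y → ℝ) : Setoid Y where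
  r y y' := ∃ C, ∀ n, |v n y - v n y'| ≤ C
  iseqv :=
    { refl := fun _ => ⟨0, fun _ => by simp⟩
      symm := fun ⟨C, hC⟩ => ⟨C, fun n => by rw [abs_sub_comm]; exact hC n⟩
      trans := fun ⟨C, hC⟩ ⟨C', hC'⟩ =>
        ⟨C + C', fun n => (abs_sub_le _ _ _).trans (add_le_add (hC n) (hC' n))⟩ }

theorem exists_isPotentialPair_of_forall_pos_add
    (h : ∀ ε > 0, ∃ v, IsPotentialPair α β f (D + ε) v v) :
    ∃ v, IsPotentialPair α β f D v v := by
  choose v hv using fun n : ℕ => h (1 / ((n : ℝ) + 1)) Nat.one_div_pos_of_nat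
  -- The `v n` may be unbounded, so they are normalised to vanish at one point of each class of
  -- `boundedDiffSetoid v`. This preserves the constraints, which relate values within one class.
  let base (y : Y) : Y := (Quotient.mk (boundedDiffSetoid v) y).out
  let w (n : ℕ) (y : Y) : ℝ := v n y - v n (base y)
  have base_eq {p q : X} (hpq : β p = β q) : base (α p) = base (α q) := by
    refine congrArg Quotient.out (Quotient.sound ⟨|f q - f p| + D + 1, fun n => ?_⟩)
    have hn : 1 / ((n : ℝ) + 1) ≤ 1 := by
      rw [div_le_one (by positivity)]; linarith [n.cast_nonneg (α := ℝ)]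
    rw [abs_le]
    constructor <;>
      linarith [hv n p q hpq, hv n q p hpq.symm, le_abs_self (f q - f p), neg_abs_le (f q - f p)]
  have w_tendsto (y : Y) : ∃ l, Tendsto (w · y) (hyperfilter ℕ : Filter ℕ) (𝓝 l) := by
    obtain ⟨C, hC⟩ := (boundedDiffSetoid v).symm (Quotient.mk_out y)
    exact exists_tendsto_ultrafilter_of_abs_le _ hC
  choose g hg using w_tendsto
  refine ⟨g, fun p q hpq => ?_⟩
  have hD : Tendsto (fun n : ℕ => D + 1 / ((n : ℝ) + 1)) (hyperfilter ℕ : Filter ℕ) (𝓝 D) := by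
    simpa using (tendsto_one_div_add_atTop_nhds_zero_nat.const_add D).mono_left
      Nat.hyperfilter_le_atTop
  refine le_of_tendsto_of_tendsto' (hg (α q)) ((hg (α p)).add (hD.const_add _)) fun n => ?_
  simp only [w, base_eq hpq]
  linarith [hv n p q hpq]

end Potentials

section Relaxation

variable {X Y Z : Type*} {α : X → Y} {β : X → Z} {f : X → ℝ} {D : ℝ} {u v : Y → ℝ}

/-- The largest `u` for which `(u, v)` is a potential pair: the Bellman relaxation of `v` along
the constraints. It takes the value `0` outside the range of `α`, where the infimum is empty. -/
noncomputable def relaxation (α : X → Y) (β : X → Z) (f : X → ℝ) (D : ℝ) (v : Y → ℝ) (y : Y) : ℝ :=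
  sInf {t | ∃ p q, β p = β q ∧ α q = y ∧ t = v (α p) + (f q - f p + D)}

namespace IsPotentialPair

theorem relaxation_left (h : IsPotentialPair α β f D u v) :
    IsPotentialPair α β f D (relaxation α β f D v) v := by
  refine fun p q hpq => csInf_le ⟨u (α q), ?_⟩ ⟨p, q, hpq, rfl, rfl⟩
  rintro _ ⟨p', q', hpq', hq', rfl⟩
  exact hq' ▸ h p' q' hpq'

theorem le_relaxation (h : IsPotentialPair α β f D u v) (hα : α.Surjective) :
    u ≤ relaxation α β f D v := by
  intro y
  obtain ⟨q₀, rfl⟩ := hα y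
  refine le_csInf ⟨_, q₀, q₀, rfl, rfl, rfl⟩ ?_
  rintro _ ⟨p, q, hpq, hq, rfl⟩
  exact hq ▸ h p q hpq

end IsPotentialPair

variable [PseudoMetricSpace X] [TopologicalSpace Y]

/-- Every link `β p = β q` whose endpoint `q` projects close to `α q₀` is close to a link
`β p' = β q'` with `α p' = α p` whose endpoint `q'` projects exactly to `α q₀`. Neighbourhoods are
pulled back along `α` so that the condition depends only on the corestriction of `α` to its
range. -/
def LinkStable (α : X → Y) (β : X → Z) : Prop :=
  ∀ q₀, ∀ ε > 0, ∀ᶠ q in comap α (𝓝 (α q₀)), ∀ p, β p = β q →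
    ∃ p' q', α p' = α p ∧ α q' = α q₀ ∧ β p' = β q' ∧ dist p' p < ε ∧ dist q' q < ε

protected theorem LinkStable.rangeFactorization (h : LinkStable α β) :
    LinkStable (rangeFactorization α) (rangeFactorization β) := by
  intro q₀ ε hε
  rw [nhds_subtype, comap_comap]
  simpa only [rangeFactorization_eq, rangeFactorization_coe,
    rangeFactorization_eq_rangeFactorization_iff] using h q₀ ε hε

theorem LinkStable.lowerSemicontinuous_relaxation (hlink : LinkStable α β) (hα : α.Surjective)
    (hf : UniformContinuous f) (h : IsPotentialPair α β f D u v) :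
    LowerSemicontinuous (relaxation α β f D v) := by
  intro y₀ c hc
  obtain ⟨q₀, rfl⟩ := hα y₀
  obtain ⟨η, hη, hcη⟩ : ∃ η > 0, c + 2 * η < relaxation α β f D v (α q₀) :=
    ⟨(relaxation α β f D v (α q₀) - c) / 3, by linarith, by linarith⟩
  obtain ⟨δ, hδ, hfδ⟩ := Metric.uniformContinuous_iff.1 hf η hη
  filter_upwards [eventually_comap.1 (hlink q₀ δ hδ)] with y hy
  refine (lt_sub_iff_add_lt.2 hcη).trans_le ?_
  obtain ⟨q₁, rfl⟩ := hα y
  refine le_csInf ⟨_, q₁, q₁, rfl, rfl, rfl⟩ ?_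
  rintro _ ⟨p, q, hpq, hq, rfl⟩
  obtain ⟨p', q', hp', hq', hpq', hpp', hqq'⟩ := hy q hq p hpq
  have hrelax := h.relaxation_left p' q' hpq'
  have hfp := (abs_lt.1 (Real.dist_eq _ _ ▸ hfδ hpp')).1
  have hfq := (abs_lt.1 (Real.dist_eq _ _ ▸ hfδ hqq')).2
  rw [hq', hp'] at hrelax
  linarith

theorem LinkStable.exists_continuousMap_isPotentialPair [NormalSpace Y] [ParacompactSpace Y]
    (hlink : LinkStable α β) (hα : α.Surjective) (hf : UniformContinuous f)
    (h : IsPotentialPair α β f D v v) : ∃ g : C(Y, ℝ), IsPotentialPair α β f D g g := by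
  set w := relaxation α β f D v
  set s := -relaxation α β (-f) D (-w)
  have hwv : IsPotentialPair α β f D w v := h.relaxation_left
  have hw : LowerSemicontinuous w := hlink.lowerSemicontinuous_relaxation hα hf h
  have hws : IsPotentialPair α β f D w s := by
    simpa only [neg_neg] using hwv.neg.relaxation_left.neg
  have hs : UpperSemicontinuous s := upperSemiContinuous_neg_iff.2
    (hlink.lowerSemicontinuous_relaxation hα hf.neg hwv.neg)
  have hsv : s ≤ v := neg_le.1 (hwv.neg.le_relaxation hα)
  obtain ⟨g, hg⟩ := exists_continuousMap_between hs hw (hsv.trans (h.le_relaxation hα))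
  exact ⟨g, hws.mono (fun y => (hg y).2) fun y => (hg y).1⟩

end Relaxation

section FiberwiseInfimum

variable {X Z : Type*} [TopologicalSpace X] [TopologicalSpace Z] {β : X → Z} {φ : X → ℝ}

theorem lowerSemicontinuous_sInf_image_fiber (hβ : IsClosedMap β) (hβ_surj : β.Surjective)
    (hφ : LowerSemicontinuous φ) (hφ_bdd : BddBelow (range φ)) :
    LowerSemicontinuous fun z => sInf (φ '' (β ⁻¹' {z})) := by
  intro z₀ c hc
  obtain ⟨c', hcc', hc'⟩ := exists_between hc
  have hfiber : ∀ p ∈ β ⁻¹' {z₀}, ∀ᶠ q in 𝓝 p, c' < φ q := fun p hp =>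
    hφ p c' (hc'.trans_le (csInf_le (hφ_bdd.mono (image_subset_range _ _)) (mem_image_of_mem φ hp)))
  filter_upwards [hβ.eventually_nhds_fiber z₀ hfiber] with z hz
  exact hcc'.trans_le
    (le_csInf (.image φ (hβ_surj z)) (forall_mem_image.2 fun p hp => (hz p hp).le))

theorem exists_continuousMap_abs_sub_le [CompactSpace X] [CompactSpace Z] [T2Space Z] {E : ℝ}
    (hβ : Continuous β) (hβ_surj : β.Surjective) (hφ : Continuous φ)
    (hosc : ∀ p q, β p = β q → φ q - φ p ≤ 2 * E) :
    ∃ h : C(Z, ℝ), ∀ p, |φ p - h (β p)| ≤ E := by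
  have bddBelow_range {ψ : X → ℝ} (hψ : Continuous ψ) : BddBelow (range ψ) :=
    (isCompact_range hψ).bddBelow
  have lsc {ψ : X → ℝ} (hψ : Continuous ψ) :=
    lowerSemicontinuous_sInf_image_fiber hβ.isClosedMap hβ_surj hψ.lowerSemicontinuous
      (bddBelow_range hψ)
  have sInf_le {ψ : X → ℝ} (hψ : Continuous ψ) (p : X) : sInf (ψ '' (β ⁻¹' {β p})) ≤ ψ p :=
    csInf_le ((bddBelow_range hψ).mono (image_subset_range _ _)) (mem_image_of_mem ψ rfl)
  have sInf_neg_le (z : Z) : -(2 * E) - sInf ((-φ) '' (β ⁻¹' {z})) ≤ sInf (φ '' (β ⁻¹' {z})) := by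
    have h_nonempty : (β ⁻¹' {z}).Nonempty := hβ_surj z
    refine le_csInf (h_nonempty.image φ) (forall_mem_image.2 fun p hp => ?_)
    rw [sub_le_comm]
    refine le_csInf (h_nonempty.image (-φ)) (forall_mem_image.2 fun q hq => ?_)
    rw [Pi.neg_apply]
    linarith [hosc p q (hp.trans hq.symm)]
  obtain ⟨h, hh⟩ := exists_continuousMap_between
    (upperSemiContinuous_neg_iff.2 ((lsc hφ.neg).add continuous_const.lowerSemicontinuous))
    ((lsc hφ).add (continuous_const (y := E)).lowerSemicontinuous) fun z => by
      rw [Pi.neg_apply]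
      linarith [sInf_neg_le z]
  refine ⟨h, fun p => abs_le.2 ⟨?_, ?_⟩⟩
  · linarith [(hh (β p)).2, sInf_le hφ p]
  · have h_lower := (hh (β p)).1
    have h_sup := sInf_le hφ.neg p
    rw [Pi.neg_apply] at h_lower h_sup
    linarith

end FiberwiseInfimum

section BestApproximation

variable {X Y Z : Type*} [PseudoMetricSpace X] [CompactSpace X] [TopologicalSpace Y]
  [TopologicalSpace Z] {α : X → Y} {β : X → Z} {f : X → ℝ} {E : ℝ}

theorem LinkStable.exists_continuousMap_add_of_surjective [CompactSpace Y] [T2Space Y]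
    [CompactSpace Z] [T2Space Z] (hlink : LinkStable α β) (hα : Continuous α)
    (hα_surj : α.Surjective) (hβ : Continuous β) (hβ_surj : β.Surjective) (hf : Continuous f)
    (h : ∀ ε > 0, ∃ v : Y → ℝ, ∃ u : Z → ℝ, ∀ p, |f p - (v (α p) + u (β p))| ≤ E + ε) :
    ∃ (g : C(Y, ℝ)) (u : C(Z, ℝ)), ∀ p, |f p - (g (α p) + u (β p))| ≤ E := by
  obtain ⟨v, hv⟩ : ∃ v, IsPotentialPair α β f (2 * E) v v := by
    refine exists_isPotentialPair_of_forall_pos_add fun ε hε => ?_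
    obtain ⟨v, u, hvu⟩ := h (ε / 2) (half_pos hε)
    have hv := isPotentialPair_of_abs_sub_le hvu
    rw [mul_add, mul_div_cancel₀ ε two_ne_zero] at hv
    exact ⟨v, hv⟩
  obtain ⟨g, hg⟩ := hlink.exists_continuousMap_isPotentialPair hα_surj
    (CompactSpace.uniformContinuous_of_continuous hf) hv
  obtain ⟨u, hu⟩ := exists_continuousMap_abs_sub_le hβ hβ_surj (φ := fun p => f p - g (α p))
    (by fun_prop) (E := E) fun p q hpq => by linarith [hg q p hpq.symm]
  exact ⟨g, u, fun p => by simpa only [sub_sub] using hu p⟩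

theorem LinkStable.exists_continuousMap_add [T4Space Y] [T4Space Z] (hlink : LinkStable α β)
    (hα : Continuous α) (hβ : Continuous β) (hf : Continuous f)
    (h : ∀ ε > 0, ∃ v : Y → ℝ, ∃ u : Z → ℝ, ∀ p, |f p - (v (α p) + u (β p))| ≤ E + ε) :
    ∃ (g : C(Y, ℝ)) (u : C(Z, ℝ)), ∀ p, |f p - (g (α p) + u (β p))| ≤ E := by
  have hα_compact := isCompact_range hα
  have hβ_compact := isCompact_range hβ
  have := isCompact_iff_compactSpace.1 hα_compact
  have := isCompact_iff_compactSpace.1 hβ_compact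
  obtain ⟨g₀, u₀, hgu⟩ := hlink.rangeFactorization.exists_continuousMap_add_of_surjective
    hα.rangeFactorization rangeFactorization_surjective hβ.rangeFactorization
    rangeFactorization_surjective hf fun ε hε => by
      obtain ⟨v, u, hvu⟩ := h ε hε
      exact ⟨fun y => v y, fun z => u z, hvu⟩
  obtain ⟨g, hg⟩ := g₀.exists_extension' hα_compact.isClosed.isClosedEmbedding_subtypeVal
  obtain ⟨u, hu⟩ := u₀.exists_extension' hβ_compact.isClosed.isClosedEmbedding_subtypeVal
  refine ⟨g, u, fun p => ?_⟩
  have hgp : g (α p) = g₀ (rangeFactorization α p) := congrFun hg (rangeFactorization α p)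
  have hup : u (β p) = u₀ (rangeFactorization β p) := congrFun hu (rangeFactorization β p)
  rw [hgp, hup]
  exact hgu p

end BestApproximation

section SupDist

variable {n : ℕ} {X : Set (Fin n → ℝ)} {f g : (Fin n → ℝ) → ℝ} {a1 a2 : Fin n → ℝ}

theorem supDist_nonneg : 0 ≤ supDist X f g := by
  refine Real.sSup_nonneg ?_
  rintro _ ⟨x, -, rfl⟩
  exact abs_nonneg _

theorem supDist_le {E : ℝ} (hE : 0 ≤ E) (h : ∀ x ∈ X, |f x - g x| ≤ E) : supDist X f g ≤ E := by
  refine Real.sSup_le ?_ hE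
  rintro _ ⟨x, hx, rfl⟩
  exact h x hx

theorem abs_sub_le_supDist (hX : IsCompact X) (hf : ContinuousOn f X) (hg : ContinuousOn g X)
    {x : Fin n → ℝ} (hx : x ∈ X) : |f x - g x| ≤ supDist X f g := by
  obtain ⟨C, hC⟩ := hX.exists_bound_of_continuousOn (hf.sub hg)
  refine le_csSup ⟨C, ?_⟩ ⟨x, hx, rfl⟩
  rintro _ ⟨y, hy, rfl⟩
  exact hC y hy

theorem continuousOn_of_mem_RcSet (hg : g ∈ RcSet a1 a2 X) : ContinuousOn g X := by
  obtain ⟨g1, g2, hg_eq, hg1, hg2⟩ := hg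
  exact (hg1.add hg2).congr hg_eq

theorem continuousMap_add_mem_RcSet (g u : C(ℝ, ℝ)) :
    (fun x => g (a1 ⬝ᵥ x) + u (a2 ⬝ᵥ x)) ∈ RcSet a1 a2 X :=
  ⟨g, u, fun _ _ => rfl, by fun_prop, by fun_prop⟩

theorem hasExtremalIn_RcSet (hX : IsCompact X) (hf : ContinuousOn f X)
    (hlink : LinkStable (fun p : X => a1 ⬝ᵥ (p : Fin n → ℝ)) fun p => a2 ⬝ᵥ (p : Fin n → ℝ)) :
    HasExtremalIn X f (RcSet a1 a2 X) := by
  set E := sInf (supDist X f '' RcSet a1 a2 X)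
  have hR : (supDist X f '' RcSet a1 a2 X).Nonempty :=
    ⟨_, _, continuousMap_add_mem_RcSet 0 0, rfl⟩
  have hR_nonneg : ∀ r ∈ supDist X f '' RcSet a1 a2 X, 0 ≤ r :=
    forall_mem_image.2 fun _ _ => supDist_nonneg
  have near_optimal : ∀ ε > 0, ∃ v u : ℝ → ℝ, ∀ p : X,
      |f p - (v (a1 ⬝ᵥ (p : Fin n → ℝ)) + u (a2 ⬝ᵥ (p : Fin n → ℝ)))| ≤ E + ε := by
    intro ε hε
    obtain ⟨_, ⟨g, hg, rfl⟩, hgε⟩ := Real.lt_sInf_add_pos hR hε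
    have ⟨v, u, hvu, _⟩ := hg
    refine ⟨v, u, fun p => ?_⟩
    rw [← hvu p p.2]
    exact (abs_sub_le_supDist hX hf (continuousOn_of_mem_RcSet hg) p.2).trans hgε.le
  have := isCompact_iff_compactSpace.1 hX
  obtain ⟨g, u, hgu⟩ := hlink.exists_continuousMap_add (by fun_prop) (by fun_prop)
    (continuousOn_iff_continuous_domRestrict.1 hf) near_optimal
  have h_mem := continuousMap_add_mem_RcSet (a1 := a1) (a2 := a2) (X := X) g u
  refine ⟨_, h_mem, le_antisymm ?_ (csInf_le ⟨0, hR_nonneg⟩ (mem_image_of_mem _ h_mem))⟩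
  exact supDist_le (Real.sInf_nonneg hR_nonneg) fun x hx => hgu ⟨x, hx⟩

end SupDist

section Prism

theorem exists_mem_inter_abs_sub_le {A B : Set ℝ} (hA : A.OrdConnected) (hB : B.OrdConnected)
    {x b : ℝ} (hx : x ∈ A) (hb : b ∈ B) (hAB : (A ∩ B).Nonempty) :
    ∃ m ∈ A ∩ B, |m - x| ≤ |b - x| := by
  obtain ⟨c, hcA, hcB⟩ := hAB
  have median : x ∈ uIcc b c ∨ b ∈ uIcc x c ∨ c ∈ uIcc x b := by
    simp only [mem_uIcc]
    grind
  rcases median with h | h | h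
  · exact ⟨x, ⟨hx, hB.uIcc_subset hb hcB h⟩, by simp⟩
  · exact ⟨b, ⟨hA.uIcc_subset hx hcA h, hb⟩, le_rfl⟩
  · exact ⟨c, ⟨hcA, hcB⟩, abs_sub_left_of_mem_uIcc h⟩

theorem eventually_comap_exists_dist_lt {X Y : Type*} [PseudoMetricSpace X]
    [TopologicalSpace Y] {α : X → Y} (hα : IsClosedMap α) (y₀ : Y) {ε : ℝ} (hε : 0 < ε) :
    ∀ᶠ q in comap α (𝓝 y₀), ∃ r, α r = y₀ ∧ dist q r < ε := by
  refine eventually_comap.2 (hα.eventually_nhds_fiber y₀ fun r hr => ?_)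
  filter_upwards [Metric.ball_mem_nhds r hε] with q hq
  exact ⟨r, hr, hq⟩

/-- The section of a planar set at height `y`, as a set of abscissae. -/
def horizontalSlice (Q : Set (Fin 2 → ℝ)) (y : ℝ) : Set ℝ := {x | ![x, y] ∈ Q}

/-- The solid with planar base `Q` and third coordinate in `T`. -/
def prism (Q : Set (Fin 2 → ℝ)) (T : Set ℝ) : Set (Fin 3 → ℝ) :=
  {x | ![x 0, x 1] ∈ Q ∧ x 2 ∈ T}

variable {Q : Set (Fin 2 → ℝ)} {T : Set ℝ}

theorem isCompact_prism (hQ : IsCompact Q) (hT : IsCompact T) : IsCompact (prism Q T) := by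
  have h_image : prism Q T = (fun w : (Fin 2 → ℝ) × ℝ => ![w.1 0, w.1 1, w.2]) '' Q ×ˢ T := by
    ext x
    constructor
    · exact fun hx => ⟨(![x 0, x 1], x 2), hx, by ext i; fin_cases i <;> rfl⟩
    · rintro ⟨⟨w, t⟩, ⟨hw, ht⟩, rfl⟩
      exact ⟨by convert hw using 1; ext i; fin_cases i <;> rfl, ht⟩
  rw [h_image]
  exact (hQ.prod hT).image (by fun_prop)

theorem linkStable_prism (hQ : IsCompact Q) (hT : IsCompact T)
    (hslice : ∀ y, (horizontalSlice Q y).OrdConnected)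
    (hmeet : ∀ y₀, ∀ᶠ y' in 𝓝 y₀, ∀ y, (horizontalSlice Q y ∩ horizontalSlice Q y').Nonempty →
      (horizontalSlice Q y ∩ horizontalSlice Q y₀).Nonempty) :
    LinkStable (fun p : prism Q T => (p : Fin 3 → ℝ) 1) fun p => (p : Fin 3 → ℝ) 0 := by
  have := isCompact_iff_compactSpace.1 (isCompact_prism hQ hT)
  have hα : Continuous fun p : prism Q T => (p : Fin 3 → ℝ) 1 :=
    (continuous_apply 1).comp continuous_subtype_val
  intro q₀ ε hε
  set y₀ := (q₀ : Fin 3 → ℝ) 1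
  filter_upwards [eventually_comap_exists_dist_lt hα.isClosedMap y₀ hε,
    tendsto_comap.eventually (hmeet y₀)]
  rintro ⟨q, hq⟩ ⟨⟨r, hr⟩, hry, hqr⟩ hmeet_q ⟨p, hp⟩ (hpq : p 0 = q 0)
  have hqr' : ∀ i, |r i - q i| < ε := fun i => by
    rw [← Real.dist_eq, dist_comm]
    exact (dist_le_pi_dist q r i).trans_lt hqr
  have hpA : q 0 ∈ horizontalSlice Q (p 1) := hpq ▸ hp.1
  have hrB : r 0 ∈ horizontalSlice Q y₀ := hry ▸ hr.1
  -- The median of `q 0`, the nearby abscissa `r 0` at height `y₀` and a common abscissa of the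
  -- slices at heights `p 1` and `y₀` lies in both of these slices.
  obtain ⟨m, ⟨hmA, hmB⟩, hm⟩ := exists_mem_inter_abs_sub_le (hslice (p 1)) (hslice y₀) hpA hrB
    (hmeet_q (p 1) ⟨q 0, hpA, hq.1⟩)
  have hmε : |m - q 0| < ε := hm.trans_lt (hqr' 0)
  refine ⟨⟨![m, p 1, p 2], hmA, hp.2⟩, ⟨![m, y₀, q 2], hmB, hq.2⟩, rfl, rfl, rfl, ?_, ?_⟩
  · refine (dist_pi_lt_iff hε).2 fun i => ?_
    fin_cases i <;> simp [Real.dist_eq, hε, hmε, hpq]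
  · refine (dist_pi_lt_iff hε).2 fun i => ?_
    have hyε : |y₀ - q 1| < ε := hry ▸ hqr' 1
    fin_cases i <;> simp [Real.dist_eq, hε, hmε, hyε]

theorem proximinality_of_Rc_on_prism_over_Q_general (hQ : IsCompact Q) (hT : IsCompact T)
    (hslice : ∀ y, (horizontalSlice Q y).OrdConnected)
    (hmeet : ∀ y₀, ∀ᶠ y' in 𝓝 y₀, ∀ y, (horizontalSlice Q y ∩ horizontalSlice Q y').Nonempty →
      (horizontalSlice Q y ∩ horizontalSlice Q y₀).Nonempty)
    {f : (Fin 3 → ℝ) → ℝ} (hf : ContinuousOn f (prism Q T)) :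
    HasExtremalIn (prism Q T) f (RcSet ![0, 1, 0] ![1, 0, 0] (prism Q T)) := by
  refine hasExtremalIn_RcSet (isCompact_prism hQ hT) hf ?_
  simpa [dotProduct, Fin.sum_univ_three] using linkStable_prism hQ hT hslice hmeet

end Prism

section TwoTriangles

theorem mem_convexHull_triple {V : Type*} [AddCommGroup V] [Module ℝ V] {A B C P : V} :
    P ∈ convexHull ℝ {A, B, C} ↔
      ∃ a b c : ℝ, 0 ≤ a ∧ 0 ≤ b ∧ 0 ≤ c ∧ a + b + c = 1 ∧ a • A + b • B + c • C = P := by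
  constructor
  · rw [← convexJoin_singleton_segment, mem_convexJoin]
    rintro ⟨_, rfl, _, ⟨s, t, hs, ht, hst, rfl⟩, ⟨a, b, ha, hb, hab, rfl⟩⟩
    refine ⟨a, b * s, b * t, ha, by positivity, by positivity, ?_, by module⟩
    rw [add_assoc, ← mul_add, hst, mul_one, hab]
  · rintro ⟨a, b, c, ha, hb, hc, habc, rfl⟩
    exact mem_convexHull_of_exists_fintype ![a, b, c] ![A, B, C] (by simp [Fin.forall_fin_succ, *])
      (by simpa [Fin.sum_univ_three] using habc) (by simp [Fin.forall_fin_succ])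
      (by simp [Fin.sum_univ_three])

theorem vec_mem_convexHull_triple {x y x₁ y₁ x₂ y₂ x₃ y₃ : ℝ} :
    ![x, y] ∈ convexHull ℝ {![x₁, y₁], ![x₂, y₂], ![x₃, y₃]} ↔
      ∃ a b c : ℝ, 0 ≤ a ∧ 0 ≤ b ∧ 0 ≤ c ∧ a + b + c = 1 ∧
        a * x₁ + b * x₂ + c * x₃ = x ∧ a * y₁ + b * y₂ + c * y₃ = y := by
  simp [mem_convexHull_triple, funext_iff, Fin.forall_fin_two]

theorem mem_horizontalSlice_Qset {x y : ℝ} : x ∈ horizontalSlice Qset y ↔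
    (0 ≤ y ∧ y ≤ 2 * x ∧ 2 * x + y ≤ 4) ∨ (y ≤ 1 ∧ 4 ≤ 2 * x + y ∧ 2 * x - 6 ≤ y) := by
  refine or_congr (vec_mem_convexHull_triple.trans ⟨?_, ?_⟩)
    (vec_mem_convexHull_triple.trans ⟨?_, ?_⟩)
  · rintro ⟨a, b, c, ha, hb, hc, habc, rfl, rfl⟩
    refine ⟨?_, ?_, ?_⟩ <;> linarith
  · rintro ⟨h₁, h₂, h₃⟩
    refine ⟨(4 - y - 2 * x) / 4, y / 2, (x - y / 2) / 2, ?_, ?_, ?_, ?_, ?_, ?_⟩ <;> linarith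
  · rintro ⟨a, b, c, ha, hb, hc, habc, rfl, rfl⟩
    refine ⟨?_, ?_, ?_⟩ <;> linarith
  · rintro ⟨h₁, h₂, h₃⟩
    refine ⟨(6 + y - 2 * x) / 4, (1 - y) / 2, (2 * x + y - 4) / 4, ?_, ?_, ?_, ?_, ?_, ?_⟩ <;>
      linarith

theorem isCompact_Qset : IsCompact Qset :=
  ((toFinite _).isCompact_convexHull ℝ).union ((toFinite _).isCompact_convexHull ℝ)

theorem ordConnected_horizontalSlice_Qset (y : ℝ) : (horizontalSlice Qset y).OrdConnected := by
  refine ⟨fun x hx x' hx' t ht => ?_⟩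
  rw [mem_horizontalSlice_Qset] at hx hx' ⊢
  obtain ⟨hxt, htx'⟩ := ht
  grind

theorem horizontalSlice_Qset_inter_nonempty {y y' : ℝ} :
    (horizontalSlice Qset y ∩ horizontalSlice Qset y').Nonempty ↔
      (y ∈ Icc 0 2 ∧ y' ∈ Icc 0 2) ∨ (y ∈ Icc (-1) 1 ∧ y' ∈ Icc (-1) 1) := by
  constructor
  · rintro ⟨x, hx, hx'⟩
    rw [mem_horizontalSlice_Qset] at hx hx'
    simp only [mem_Icc]
    grind
  · rintro (⟨hy, hy'⟩ | ⟨hy, hy'⟩)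
    · exact ⟨1, mem_horizontalSlice_Qset.2 (by grind), mem_horizontalSlice_Qset.2 (by grind)⟩
    · exact ⟨5 / 2, mem_horizontalSlice_Qset.2 (by grind), mem_horizontalSlice_Qset.2 (by grind)⟩

theorem eventually_horizontalSlice_Qset_inter_nonempty (y₀ : ℝ) :
    ∀ᶠ y' in 𝓝 y₀, ∀ y, (horizontalSlice Qset y ∩ horizontalSlice Qset y').Nonempty →
      (horizontalSlice Qset y ∩ horizontalSlice Qset y₀).Nonempty := by
  have closed_mem {C : Set ℝ} (hC : IsClosed C) : ∀ᶠ y' in 𝓝 y₀, y' ∈ C → y₀ ∈ C := by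
    by_cases h₀ : y₀ ∈ C
    · exact .of_forall fun _ _ => h₀
    · filter_upwards [hC.isOpen_compl.mem_nhds h₀] with y' hy' h using absurd h hy'
  filter_upwards [closed_mem (isClosed_Icc (a := 0) (b := 2)),
    closed_mem (isClosed_Icc (a := -1) (b := 1))] with y' h₁ h₂ y
  rw [horizontalSlice_Qset_inter_nonempty, horizontalSlice_Qset_inter_nonempty]
  exact Or.imp (And.imp_right h₁) (And.imp_right h₂)

end TwoTriangles

/-- Example (c): for `X = {(x₁,x₂,x₃) : (x₁,x₂) ∈ Q, 0 ≤ x₃ ≤ 1}`,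
`a¹ = (0,1,0)` and `a² = (1,0,0)`, the space `R_c(X)` is proximinal in `C(X)`. -/
theorem proximinality_of_Rc_on_prism_over_Q
    (X : Set (Fin 3 → ℝ))
    (hXdef : X = {x : Fin 3 → ℝ | ![x 0, x 1] ∈ Qset ∧ x 2 ∈ Set.Icc (0 : ℝ) 1})
    (f : (Fin 3 → ℝ) → ℝ) (hf : ContinuousOn f X) :
    HasExtremalIn X f (RcSet ![(0 : ℝ), 1, 0] ![(1 : ℝ), 0, 0] X) := by
  subst hXdef
  exact proximinality_of_Rc_on_prism_over_Q_general isCompact_Qset isCompact_Icc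
    ordConnected_horizontalSlice_Qset eventually_horizontalSlice_Qset_inter_nonempty hf
end

section
/- Let I = [0,1]² be the unit square, a¹ = (1, 1) and a² = (1, 1/2). For every integer k ≥ 1 there exists a continuous function g_k : ℝ → ℝ such that the function f_k(x) = g_k(a¹·x) on I satisfies sup_{t∈I} var_{{x∈I : a²·x = a²·t}} f_k ≤ 1 and sup_{t∈I} var_{O(t)} f_k = k. -/
open Matrix Set Filter Topology

/-! Let `a¹ = (1, 1)` and `a² = (1, s)` with `0 < s < 1`. On a line `a² ⬝ x = const` in the
nonnegative quadrant, `a¹ ⬝ x` varies by a factor of at most `s⁻¹`, so its logarithm to base `s`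
varies by at most `1`. The path `(0, 1), (s, 0), (0, s), (s², 0), …` stays in the square and
converges to the corner `0`, multiplying `a¹ ⬝ x` by `s` at every second step, so along it the
logarithm is unbounded. Truncating the logarithm to values in `[0, c]` makes it continuous, keeps
the first bound, and makes the variation on the orbit of `(0, 1)` exactly `c`. -/

section Variation

variable {n : ℕ} {f : (Fin n → ℝ) → ℝ} {c : ℝ}

lemma varOn_le {Y : Set (Fin n → ℝ)} (hc : 0 ≤ c) (h : ∀ x ∈ Y, ∀ y ∈ Y, |f x - f y| ≤ c) :
    varOn f Y ≤ c := by
  refine Real.sSup_le ?_ hc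
  rintro _ ⟨x, hx, y, hy, rfl⟩
  exact h x hx y hy

lemma abs_sub_le_varOn {Y : Set (Fin n → ℝ)} (h : ∀ x ∈ Y, ∀ y ∈ Y, |f x - f y| ≤ c)
    {x y : Fin n → ℝ} (hx : x ∈ Y) (hy : y ∈ Y) : |f x - f y| ≤ varOn f Y := by
  refine le_csSup ⟨c, ?_⟩ ⟨x, hx, y, hy, rfl⟩
  rintro _ ⟨x', hx', y', hy', rfl⟩
  exact h x' hx' y' hy'

variable {X : Set (Fin n → ℝ)} {S : (Fin n → ℝ) → Set (Fin n → ℝ)}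

lemma sSup_varOn_le (hc : 0 ≤ c) (h : ∀ t ∈ X, ∀ x ∈ S t, ∀ y ∈ S t, |f x - f y| ≤ c) :
    sSup {r | ∃ t ∈ X, r = varOn f (S t)} ≤ c := by
  refine Real.sSup_le ?_ hc
  rintro _ ⟨t, ht, rfl⟩
  exact varOn_le hc (h t ht)

lemma sSup_varOn_eq (h : ∀ t ∈ X, ∀ x ∈ S t, ∀ y ∈ S t, |f x - f y| ≤ c) {t x y : Fin n → ℝ}
    (ht : t ∈ X) (hx : x ∈ S t) (hy : y ∈ S t) (hxy : |f x - f y| = c) :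
    sSup {r | ∃ t ∈ X, r = varOn f (S t)} = c := by
  have hc : 0 ≤ c := hxy ▸ abs_nonneg _
  have hbdd : BddAbove {r | ∃ t ∈ X, r = varOn f (S t)} := by
    refine ⟨c, ?_⟩
    rintro _ ⟨u, hu, rfl⟩
    exact varOn_le hc (h u hu)
  refine (sSup_varOn_le hc h).antisymm ?_
  calc c = |f x - f y| := hxy.symm
    _ ≤ varOn f (S t) := abs_sub_le_varOn (h t ht) hx hy
    _ ≤ _ := le_csSup hbdd ⟨t, ht, rfl⟩

end Variation

section Path

variable {n : ℕ} {a1 a2 : Fin n → ℝ} {p : ℕ → Fin n → ℝ}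

lemma IsPathFrom.of_even_odd
    (heven : ∀ j, p (2 * j + 1) - p (2 * j) ≠ 0 ∧ a1 ⬝ᵥ (p (2 * j + 1) - p (2 * j)) = 0)
    (hodd : ∀ j, p (2 * (j + 1)) - p (2 * j + 1) ≠ 0 ∧
      a2 ⬝ᵥ (p (2 * (j + 1)) - p (2 * j + 1)) = 0) (m : ℕ) :
    IsPathFrom a1 a2 m p := by
  intro i _
  obtain ⟨j, rfl | rfl⟩ := Nat.even_or_odd' i
  · exact ⟨(heven j).1, fun _ => (heven j).2, by lia⟩
  · exact ⟨(hodd j).1, by lia, fun _ => (hodd j).2⟩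

lemma IsPathIn.mem_orbit {X : Set (Fin n → ℝ)} {m i j : ℕ} (hp : IsPathIn a1 a2 X m p)
    (hi : i < m) (hj : j < m) : p j ∈ Orbit a1 a2 X (p i) :=
  ⟨m, p, hp, ⟨i, hi, rfl⟩, ⟨j, hj, rfl⟩⟩

end Path

section TruncLogb

/-- The logarithm to base `b`, with its argument truncated to `[b ^ c, 1]`; for `0 < b < 1` and
`0 ≤ c` this truncates its values to `[0, c]`. The truncation is applied to the argument so that
the junk values of `Real.logb` at nonpositive reals do not occur. -/
noncomputable def truncLogb (b c u : ℝ) : ℝ :=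
  Real.logb b (max (b ^ c) (min 1 u))

variable {b c u w : ℝ}

lemma max_rpow_pos (hb : 0 < b) : 0 < max (b ^ c) u :=
  lt_max_of_lt_left (Real.rpow_pos_of_pos hb c)

lemma continuous_truncLogb (hb : 0 < b) : Continuous (truncLogb b c) :=
  ((by fun_prop : Continuous fun u : ℝ => max (b ^ c) (min 1 u)).log
    fun _ => (max_rpow_pos hb).ne').div_const _

lemma truncLogb_nonneg (hb₀ : 0 < b) (hb₁ : b < 1) (hc : 0 ≤ c) : 0 ≤ truncLogb b c u :=
  Real.logb_nonneg_of_base_lt_one hb₀ hb₁ (max_rpow_pos hb₀)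
    (max_le (Real.rpow_le_one hb₀.le hb₁.le hc) (min_le_left _ _))

lemma truncLogb_le (hb₀ : 0 < b) (hb₁ : b < 1) : truncLogb b c u ≤ c :=
  (Real.logb_le_iff_le_rpow_of_base_lt_one hb₀ hb₁ (max_rpow_pos hb₀)).2 (le_max_left _ _)

lemma abs_truncLogb_sub_le (hb₀ : 0 < b) (hb₁ : b < 1) (hc : 0 ≤ c) :
    |truncLogb b c u - truncLogb b c w| ≤ c :=
  abs_sub_le_of_nonneg_of_le (truncLogb_nonneg hb₀ hb₁ hc) (truncLogb_le hb₀ hb₁)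
    (truncLogb_nonneg hb₀ hb₁ hc) (truncLogb_le hb₀ hb₁)

lemma truncLogb_one (hb₀ : 0 ≤ b) (hb₁ : b ≤ 1) (hc : 0 ≤ c) : truncLogb b c 1 = 0 := by
  rw [truncLogb, min_self, max_eq_right (Real.rpow_le_one hb₀ hb₁ hc), Real.logb_one]

lemma truncLogb_of_le_rpow (hb₀ : 0 < b) (hb₁ : b ≠ 1) (hu : u ≤ b ^ c) : truncLogb b c u = c := by
  rw [truncLogb, max_eq_left (min_le_of_right_le hu), Real.logb_rpow hb₀ hb₁]

lemma mul_max_min_one_le {a : ℝ} (ha : 0 ≤ a) (hb₀ : 0 ≤ b) (hb₁ : b ≤ 1) (h : b * w ≤ u) :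
    b * max a (min 1 w) ≤ max a (min 1 u) := by
  rw [mul_max_of_nonneg _ _ hb₀, mul_min_of_nonneg _ _ hb₀, mul_one]
  exact max_le_max (mul_le_of_le_one_left ha hb₁) (min_le_min hb₁ h)

lemma truncLogb_le_add_one (hb₀ : 0 < b) (hb₁ : b < 1) (h : b * w ≤ u) :
    truncLogb b c u ≤ truncLogb b c w + 1 := by
  have hpos : 0 < max (b ^ c) (min 1 w) := max_rpow_pos hb₀
  calc truncLogb b c u ≤ Real.logb b (b * max (b ^ c) (min 1 w)) :=
        (Real.logb_le_logb_of_base_lt_one hb₀ hb₁ (max_rpow_pos hb₀) (mul_pos hb₀ hpos)).2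
          (mul_max_min_one_le (Real.rpow_nonneg hb₀.le c) hb₀.le hb₁.le h)
    _ = truncLogb b c w + 1 := by
        have hlogb : Real.logb b b = 1 :=
          Real.logb_self_eq_one_iff.2 ⟨hb₀.ne', hb₁.ne, by linarith⟩
        rw [Real.logb_mul hb₀.ne' hpos.ne', hlogb, add_comm, truncLogb]

lemma abs_truncLogb_sub_le_one (hb₀ : 0 < b) (hb₁ : b < 1) (huw : b * u ≤ w) (hwu : b * w ≤ u) :
    |truncLogb b c u - truncLogb b c w| ≤ 1 :=
  abs_sub_le_iff.2 ⟨sub_le_iff_le_add'.2 (truncLogb_le_add_one hb₀ hb₁ hwu),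
    sub_le_iff_le_add'.2 (truncLogb_le_add_one hb₀ hb₁ huw)⟩

end TruncLogb

lemma mul_dotProduct_le_of_dotProduct_eq {ι R : Type*} [Fintype ι] [Semiring R] [PartialOrder R]
    [IsOrderedRing R] {s : R} {a1 a2 x y : ι → R} (hsa : s • a1 ≤ a2) (ha : a2 ≤ a1) (hx : 0 ≤ x)
    (hy : 0 ≤ y) (hxy : a2 ⬝ᵥ x = a2 ⬝ᵥ y) : s * (a1 ⬝ᵥ x) ≤ a1 ⬝ᵥ y :=
  calc s * (a1 ⬝ᵥ x) = (s • a1) ⬝ᵥ x := (smul_dotProduct s a1 x).symm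
    _ ≤ a2 ⬝ᵥ x := dotProduct_le_dotProduct_of_nonneg_right hsa hx
    _ = a2 ⬝ᵥ y := hxy
    _ ≤ a1 ⬝ᵥ y := dotProduct_le_dotProduct_of_nonneg_right ha hy

lemma abs_truncLogb_dotProduct_sub_le_one {ι : Type*} [Fintype ι] {s c : ℝ} {a1 a2 x y : ι → ℝ}
    (hs₀ : 0 < s) (hs₁ : s < 1) (hsa : s • a1 ≤ a2) (ha : a2 ≤ a1) (hx : 0 ≤ x) (hy : 0 ≤ y)
    (hxy : a2 ⬝ᵥ x = a2 ⬝ᵥ y) :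
    |truncLogb s c (a1 ⬝ᵥ x) - truncLogb s c (a1 ⬝ᵥ y)| ≤ 1 :=
  abs_truncLogb_sub_le_one hs₀ hs₁ (mul_dotProduct_le_of_dotProduct_eq hsa ha hx hy hxy)
    (mul_dotProduct_le_of_dotProduct_eq hsa ha hy hx hxy.symm)

section Zigzag

/-- The path `(0, 1), (s, 0), (0, s), (s², 0), (0, s²), …` for the directions `(1, s)` and `(1, 1)`;
the index `i / 2` makes `(0, s ^ j)` the point of index `2 * j`. -/
def zigzag (s : ℝ) (i : ℕ) : Fin 2 → ℝ :=
  if Even i then ![0, s ^ (i / 2)] else ![s ^ (i / 2 + 1), 0]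

lemma zigzag_even (s : ℝ) (j : ℕ) : zigzag s (2 * j) = ![0, s ^ j] := by
  simp [zigzag]

lemma zigzag_odd (s : ℝ) (j : ℕ) : zigzag s (2 * j + 1) = ![s ^ (j + 1), 0] := by
  have hdiv : (2 * j + 1) / 2 = j := by lia
  simp [zigzag, hdiv]

variable {s : ℝ}

lemma zigzag_mem_Icc (hs₀ : 0 ≤ s) (hs₁ : s ≤ 1) (i : ℕ) : zigzag s i ∈ Icc (0 : Fin 2 → ℝ) 1 := by
  have hpow₀ (j : ℕ) : 0 ≤ s ^ j := pow_nonneg hs₀ j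
  have hpow₁ (j : ℕ) : s ^ j ≤ 1 := pow_le_one₀ hs₀ hs₁
  obtain ⟨j, rfl | rfl⟩ := Nat.even_or_odd' i
  · simp [zigzag_even, Pi.le_def, hpow₀, hpow₁]
  · simp [zigzag_odd, Pi.le_def, hpow₀, hpow₁]

lemma isPathFrom_zigzag (hs : s ≠ 0) (m : ℕ) :
    IsPathFrom ![(1 : ℝ), s] ![(1 : ℝ), 1] m (zigzag s) := by
  refine .of_even_odd (fun j => ?_) (fun j => ?_) m <;> rw [zigzag_even, zigzag_odd]
  · exact ⟨by simp [hs], by simp [pow_succ']⟩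
  · exact ⟨by simp [hs], by simp⟩

lemma isPathIn_zigzag (hs₀ : 0 < s) (hs₁ : s ≤ 1) {m : ℕ} (hm : 1 ≤ m) :
    IsPathIn ![(1 : ℝ), 1] ![(1 : ℝ), s] (Icc (0 : Fin 2 → ℝ) 1) m (zigzag s) :=
  ⟨hm, .inr (isPathFrom_zigzag hs₀.ne' m), fun i _ => zigzag_mem_Icc hs₀.le hs₁ i⟩

lemma zigzag_even_mem_orbit (hs₀ : 0 < s) (hs₁ : s ≤ 1) (j : ℕ) :
    ![0, s ^ j] ∈ Orbit ![(1 : ℝ), 1] ![(1 : ℝ), s] (Icc (0 : Fin 2 → ℝ) 1) ![0, 1] := by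
  have hpath := isPathIn_zigzag hs₀ hs₁ (m := 2 * j + 1) (by lia)
  simpa [zigzag_even, zigzag] using hpath.mem_orbit (i := 0) (j := 2 * j) (by lia) (by lia)

end Zigzag

theorem exists_gk_with_small_section_variation_and_large_orbit_variation_general
    {s c : ℝ} (hs₀ : 0 < s) (hs₁ : s < 1) (hc : 0 ≤ c) :
    ∃ g : ℝ → ℝ, Continuous g ∧
      sSup {r | ∃ t ∈ Icc (0 : Fin 2 → ℝ) 1,
          r = varOn (fun x => g (![(1 : ℝ), 1] ⬝ᵥ x))
            {x ∈ Icc (0 : Fin 2 → ℝ) 1 | ![(1 : ℝ), s] ⬝ᵥ x = ![(1 : ℝ), s] ⬝ᵥ t}} ≤ 1 ∧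
      sSup {r | ∃ t ∈ Icc (0 : Fin 2 → ℝ) 1,
          r = varOn (fun x => g (![(1 : ℝ), 1] ⬝ᵥ x))
            (Orbit ![(1 : ℝ), 1] ![(1 : ℝ), s] (Icc (0 : Fin 2 → ℝ) 1) t)} = c := by
  refine ⟨truncLogb s c, continuous_truncLogb hs₀, sSup_varOn_le zero_le_one ?_, ?_⟩
  · rintro _ _ x ⟨hx, hxt⟩ y ⟨hy, hyt⟩
    have hsa : s • ![(1 : ℝ), 1] ≤ ![1, s] := by simp [Pi.le_def, hs₁.le]
    have ha : ![1, s] ≤ ![(1 : ℝ), 1] := by simp [Pi.le_def, hs₁.le]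
    exact abs_truncLogb_dotProduct_sub_le_one hs₀ hs₁ hsa ha hx.1 hy.1 (hxt.trans hyt.symm)
  · obtain ⟨j, hcj⟩ := exists_nat_ge c
    have hpow : s ^ j ≤ s ^ c := by
      rw [← Real.rpow_natCast]
      exact Real.rpow_le_rpow_of_exponent_ge hs₀ hs₁.le hcj
    refine sSup_varOn_eq (fun _ _ _ _ _ _ => abs_truncLogb_sub_le hs₀ hs₁ hc)
      (t := ![0, 1]) (x := ![0, s ^ j]) (y := ![0, 1]) (by simp [Pi.le_def])
      (zigzag_even_mem_orbit hs₀ hs₁.le j) (by simpa using zigzag_even_mem_orbit hs₀ hs₁.le 0) ?_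
    simp [truncLogb_of_le_rpow hs₀ hs₁.ne hpow, truncLogb_one hs₀.le hs₁.le hc, hc]

/-- on the unit square `I = [0,1]²` with `a¹ = (1,1)`,
`a² = (1,1/2)`, for every `k ≥ 1` there is a continuous `g_k : ℝ → ℝ` such that
`f_k(x) = g_k(a¹·x)` satisfies `sup_{t∈I} var_{π₂⁻¹(π₂(t))} f_k ≤ 1` and
`sup_{t∈I} var_{O(t)} f_k = k`. -/
theorem exists_gk_with_small_section_variation_and_large_orbit_variation
    (k : ℕ) (hk : 1 ≤ k) :
    ∃ g : ℝ → ℝ, Continuous g ∧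
      sSup {r | ∃ t ∈ Set.Icc (0 : Fin 2 → ℝ) 1,
          r = varOn (fun x => g (![(1 : ℝ), 1] ⬝ᵥ x))
            {x ∈ Set.Icc (0 : Fin 2 → ℝ) 1 |
              ![(1 : ℝ), 1 / 2] ⬝ᵥ x = ![(1 : ℝ), 1 / 2] ⬝ᵥ t}} ≤ 1 ∧
      sSup {r | ∃ t ∈ Set.Icc (0 : Fin 2 → ℝ) 1,
          r = varOn (fun x => g (![(1 : ℝ), 1] ⬝ᵥ x))
            (Orbit ![(1 : ℝ), 1] ![(1 : ℝ), 1 / 2] (Set.Icc (0 : Fin 2 → ℝ) 1) t)} =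
        (k : ℝ) := by
  exact exists_gk_with_small_section_variation_and_large_orbit_variation_general
    (by norm_num) (by norm_num) k.cast_nonneg
end
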